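/- arXiv:0906.1632 — 2 statements merged into one kernel-verified Lean document; each statement's English description precedes it below -/
import Mathlib

section
/- The conditional utility U_t maps L^∞_T into L^∞_t with U_t(0) = 0 a.s., and it satisfies: (i) monotonicity, i.e. U_t(X) ≥ U_t(Y) a.s. for all X, Y ∈ L^∞_T with X ≥ Y a.s.; and (ii) concavity, i.e. U_t(aX + (1−a)Y) ≥ a U_t(X) + (1−a) U_t(Y) a.s. for all X, Y ∈ L^∞_T and a ∈ (0,1). -/
open MeasureTheory Filter

variable {Ω : Type*}

/-- `X ∈ L^∞(m)`: `m`-measurable and (essentially) bounded. -/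
def MeasBdd (m : MeasurableSpace Ω) (X : Ω → ℝ) : Prop :=
  Measurable[m] X ∧ ∃ C : ℝ, ∀ ω, |X ω| ≤ C

/-- `u` is a utility function (strictly increasing, strictly concave, `C¹`) with
derivative `u'` satisfying `u 0 = 0`, `u' 0 = 1`, `u'(+∞) = 0`, `u'(-∞) = +∞`. -/
structure IsUtility (u u' : ℝ → ℝ) : Prop where
  strictMono : StrictMono u
  strictConcave : StrictConcaveOn ℝ Set.univ u
  hasDeriv : ∀ x, HasDerivAt u (u' x) x
  derivCont : Continuous u'
  zero : u 0 = 0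
  deriv_zero : u' 0 = 1
  deriv_top : Tendsto u' atTop (nhds 0)
  deriv_bot : Tendsto u' atBot atTop

/-- A diversification of `Z` at time `t`: an adapted family `(X i s)`,
`i = 1,…,n`, `s = t,…,T`, of essentially bounded random variables summing to `Z`. -/
def IsDiv {m0 : MeasurableSpace Ω} (P : Measure Ω) (ℱ : Filtration ℕ m0)
    (n t T : ℕ) (Z : Ω → ℝ) (X : ℕ → ℕ → Ω → ℝ) : Prop :=
  (∀ i ∈ Finset.Icc 1 n, ∀ s ∈ Finset.Icc t T, MeasBdd (ℱ s) (X i s)) ∧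
  ∀ᵐ ω ∂P, (∑ i ∈ Finset.Icc 1 n, ∑ s ∈ Finset.Icc t T, X i s ω) = Z ω

/-- The total conditional expected utility `∑_{i,s} E[u_{i,s}(X_{i,s}) | 𝓕_t]`. -/
noncomputable def utilSum {m0 : MeasurableSpace Ω} (P : Measure Ω) (ℱ : Filtration ℕ m0)
    (u : ℕ → ℕ → ℝ → ℝ) (n t T : ℕ) (X : ℕ → ℕ → Ω → ℝ) : Ω → ℝ :=
  fun ω => ∑ i ∈ Finset.Icc 1 n, ∑ s ∈ Finset.Icc t T,
    (P[fun ω' => u i s (X i s ω') | ℱ t]) ω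

/-- `g` is an essential supremum of the family `S` of random variables under `P`. -/
def IsEssSupOf {m0 : MeasurableSpace Ω} (P : Measure Ω) (S : Set (Ω → ℝ)) (g : Ω → ℝ) : Prop :=
  (∀ f ∈ S, f ≤ᵐ[P] g) ∧ ∀ h : Ω → ℝ, (∀ f ∈ S, f ≤ᵐ[P] h) → g ≤ᵐ[P] h

/-!
Placing the whole of `Z` at `(1, T)` and bounding `u_{i,s}(x) ≤ x` (the tangent at `0`) gives
`E[u_{1,T}(Z) | 𝓕_t] ≤ U_t(Z) ≤ E[Z | 𝓕_t]`, hence boundedness and `U_t(0) = 0`. Every competitor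
`f` is `𝓕_t`-measurable, so `f = E[f | 𝓕_t] ≤ E[U_t(Z) | 𝓕_t]`; thus `U_t(Z) ≤ E[U_t(Z) | 𝓕_t]`, and
the two sides have the same integral, so `U_t(Z)` is `𝓕_t`-measurable up to a null set. If `Y ≤ X`,
adding `X - Y` at `(1, T)` turns diversifications of `Y` into better ones of `X`; convex
combinations of diversifications give concavity.
-/

lemma le_tangent_of_concaveOn {S : Set ℝ} {f : ℝ → ℝ} {f' x y : ℝ} (hf : ConcaveOn ℝ S f)
    (hx : x ∈ S) (hy : y ∈ S) (hf' : HasDerivAt f f' x) : f y ≤ f x + f' * (y - x) := by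
  rcases lt_trichotomy x y with hxy | rfl | hyx
  · have hslope := hf.slope_le_of_hasDerivAt hx hy hxy hf'
    rw [slope_def_field, div_le_iff₀ (sub_pos.2 hxy)] at hslope
    linarith
  · simp
  · have hslope := hf.le_slope_of_hasDerivAt hy hx hyx hf'
    rw [slope_def_field, le_div_iff₀ (sub_pos.2 hyx)] at hslope
    linarith

lemma IsUtility.le_self {u u' : ℝ → ℝ} (hu : IsUtility u u') (x : ℝ) : u x ≤ x := by
  simpa [hu.zero, hu.deriv_zero] using
    le_tangent_of_concaveOn hu.strictConcave.concaveOn (Set.mem_univ 0) (Set.mem_univ x)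
      (hu.hasDeriv 0)

namespace MeasBdd

variable {m : MeasurableSpace Ω} {X Y : Ω → ℝ}

lemma zero : MeasBdd m (0 : Ω → ℝ) :=
  ⟨measurable_const, 0, fun _ => abs_zero.le⟩

lemma add (hX : MeasBdd m X) (hY : MeasBdd m Y) : MeasBdd m (X + Y) := by
  obtain ⟨hXm, C, hC⟩ := hX
  obtain ⟨hYm, D, hD⟩ := hY
  exact ⟨hXm.add hYm, C + D, fun ω => (abs_add_le _ _).trans (add_le_add (hC ω) (hD ω))⟩

lemma const_smul (hX : MeasBdd m X) (a : ℝ) : MeasBdd m (a • X) := by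
  obtain ⟨hXm, C, hC⟩ := hX
  refine ⟨hXm.const_smul a, |a| * C, fun ω => ?_⟩
  simpa only [Pi.smul_apply, smul_eq_mul, abs_mul] using
    mul_le_mul_of_nonneg_left (hC ω) (abs_nonneg a)

lemma sub (hX : MeasBdd m X) (hY : MeasBdd m Y) : MeasBdd m (X - Y) := by
  simpa only [neg_one_smul, ← sub_eq_add_neg] using hX.add (hY.const_smul (-1))

lemma comp_monotone (hX : MeasBdd m X) {v : ℝ → ℝ} (hv : Monotone v) :
    MeasBdd m (fun ω => v (X ω)) := by
  obtain ⟨hXm, C, hC⟩ := hX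
  exact ⟨hv.measurable.comp hXm, max |v (-C)| |v C|, fun ω =>
    abs_le_max_abs_abs (hv (abs_le.1 (hC ω)).1) (hv (abs_le.1 (hC ω)).2)⟩

variable {m0 : MeasurableSpace Ω} {P : Measure Ω}

lemma integrable [IsFiniteMeasure P] (hX : MeasBdd m X) (hm : m ≤ m0) : Integrable X P := by
  obtain ⟨hXm, C, hC⟩ := hX
  exact .of_bound (hXm.mono hm le_rfl).aestronglyMeasurable C (.of_forall hC)

end MeasBdd

lemma exists_measBdd_ae_eq {m m0 : MeasurableSpace Ω} {P : Measure Ω} {g : Ω → ℝ} {C : ℝ}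
    (hg : Measurable[m] g) (hC : ∀ᵐ ω ∂P, |g ω| ≤ C) : ∃ V, MeasBdd m V ∧ g =ᵐ[P] V := by
  refine ⟨fun ω => max (-C) (min C (g ω)),
    ⟨measurable_const.max (measurable_const.min hg), max |-C| |max (-C) C|, fun ω => ?_⟩, ?_⟩
  · exact abs_le_max_abs_abs (le_max_left _ _) (max_le_max_left _ (min_le_left _ _))
  · filter_upwards [hC] with ω hω
    rw [min_eq_right (abs_le.1 hω).2, max_eq_right (abs_le.1 hω).1]

-- The Lebesgue integral of a non-measurable function is its lower integral, attained by some
-- measurable `W ≤ h`; then `max W f` cannot have a larger integral than `W`.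
lemma exists_maximal_measurable_le {m0 : MeasurableSpace Ω} {P : Measure Ω} {h : Ω → ENNReal}
    (hfinite : ∫⁻ ω, h ω ∂P ≠ ⊤) :
    ∃ W, Measurable W ∧ W ≤ h ∧ ∀ f, AEMeasurable f P → f ≤ᵐ[P] h → f ≤ᵐ[P] W := by
  obtain ⟨W, hW, hWh, hint⟩ := exists_measurable_le_lintegral_eq P h
  refine ⟨W, hW, hWh, fun f hf hfh => ?_⟩
  have hmax_le : (fun ω => max (W ω) (f ω)) ≤ᵐ[P] h := hfh.mono fun ω hω => max_le (hWh ω) hω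
  have hmax_eq : W =ᵐ[P] fun ω => max (W ω) (f ω) :=
    ae_eq_of_ae_le_of_lintegral_le (.of_forall fun _ => le_max_left _ _) (hint ▸ hfinite)
      (hW.aemeasurable.max hf) ((lintegral_mono_ae hmax_le).trans hint.le)
  exact hmax_eq.mono fun ω hω => hω ▸ le_max_right _ _

namespace IsEssSupOf

variable {m m0 : MeasurableSpace Ω} {P : Measure Ω} {S : Set (Ω → ℝ)} {g : Ω → ℝ}

lemma integrable (hg : IsEssSupOf P S g) (hS : ∀ f ∈ S, AEMeasurable f P) {φ ψ : Ω → ℝ}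
    (hφ : Integrable φ P) (hψ : Integrable ψ P) (hφg : φ ≤ᵐ[P] g) (hgψ : g ≤ᵐ[P] ψ) :
    Integrable g P := by
  let excess (f : Ω → ℝ) (ω : Ω) : ENNReal := ENNReal.ofReal (f ω - φ ω)
  have excess_mono {f f' : Ω → ℝ} (h : f ≤ᵐ[P] f') : excess f ≤ᵐ[P] excess f' :=
    h.mono fun ω hω => ENNReal.ofReal_le_ofReal (sub_le_sub_right hω _)
  have hfinite : ∫⁻ ω, excess g ω ∂P ≠ ⊤ :=
    ((lintegral_mono_ae (excess_mono hgψ)).trans_lt (hψ.sub hφ).lintegral_lt_top).ne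
  obtain ⟨W, hW, hWg, hWmax⟩ := exists_maximal_measurable_le hfinite
  have hWtop : ∀ ω, W ω ≠ ⊤ := fun ω => ((hWg ω).trans_lt ENNReal.ofReal_lt_top).ne
  have hle : g ≤ᵐ[P] fun ω => (W ω).toReal + φ ω := hg.2 _ fun f hf => by
    have hfW := hWmax _ ((hS f hf).sub hφ.aemeasurable).ennreal_ofReal (excess_mono (hg.1 f hf))
    filter_upwards [hfW] with ω hω
    exact sub_le_iff_le_add.1 ((ENNReal.ofReal_le_iff_le_toReal (hWtop ω)).1 hω)
  have heq : (fun ω => (W ω).toReal + φ ω) =ᵐ[P] g := by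
    filter_upwards [hle, hφg] with ω hleω hφω
    exact le_antisymm (le_sub_iff_add_le.1
      (ENNReal.toReal_le_of_le_ofReal (sub_nonneg.2 hφω) (hWg ω))) hleω
  have hmeas : AEMeasurable g P :=
    (hW.ennreal_toReal.aemeasurable.add hφ.aemeasurable).congr heq
  exact integrable_of_le_of_le hmeas.aestronglyMeasurable hφg hgψ hφ hψ

lemma ae_eq_condExp (hg : IsEssSupOf P S g) (hm : m ≤ m0) [SigmaFinite (P.trim hm)]
    (hS : ∀ f ∈ S, Measurable[m] f ∧ Integrable f P) (hgi : Integrable g P) :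
    g =ᵐ[P] P[g | m] := by
  have hle : g ≤ᵐ[P] P[g | m] := hg.2 _ fun f hf => by
    have hcond := condExp_mono (m := m) (hS f hf).2 hgi (hg.1 f hf)
    rwa [condExp_of_stronglyMeasurable hm (hS f hf).1.stronglyMeasurable (hS f hf).2] at hcond
  exact (integral_eq_iff_of_ae_le hgi integrable_condExp hle).1 (integral_condExp hm).symm

lemma smul_add_le (hg : IsEssSupOf P S g) {a : ℝ} (ha : 0 < a) {k h : Ω → ℝ}
    (hS : ∀ f ∈ S, a • f + k ≤ᵐ[P] h) : a • g + k ≤ᵐ[P] h := by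
  have hle : g ≤ᵐ[P] fun ω => (h ω - k ω) / a := hg.2 _ fun f hf => (hS f hf).mono fun ω hω => by
    rw [le_div_iff₀' ha]
    exact le_sub_iff_add_le.2 hω
  exact hle.mono fun ω hω => le_sub_iff_add_le.1 ((le_div_iff₀' ha).1 hω)

lemma smul_add_smul_le {S' : Set (Ω → ℝ)} {g' : Ω → ℝ} (hg : IsEssSupOf P S g)
    (hg' : IsEssSupOf P S' g') {a b : ℝ} (ha : 0 < a) (hb : 0 < b) {h : Ω → ℝ}
    (hS : ∀ f ∈ S, ∀ f' ∈ S', a • f + b • f' ≤ᵐ[P] h) : a • g + b • g' ≤ᵐ[P] h :=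
  hg.smul_add_le ha fun f hf => by
    rw [add_comm]
    exact hg'.smul_add_le hb fun f' hf' => by simpa only [add_comm] using hS f hf f' hf'

end IsEssSupOf

lemma sum_sum_ae_le {ι κ : Type*} {m0 : MeasurableSpace Ω} {P : Measure Ω} {I : Finset ι}
    {J : Finset κ} {f g : ι → κ → Ω → ℝ} (h : ∀ i ∈ I, ∀ s ∈ J, f i s ≤ᵐ[P] g i s) :
    (fun ω => ∑ i ∈ I, ∑ s ∈ J, f i s ω) ≤ᵐ[P] fun ω => ∑ i ∈ I, ∑ s ∈ J, g i s ω := by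
  have hall : ∀ᵐ ω ∂P, ∀ i ∈ I, ∀ s ∈ J, f i s ω ≤ g i s ω :=
    (eventually_all_finset I).2 fun i hi => (eventually_all_finset J).2 (h i hi)
  filter_upwards [hall] with ω hω
  exact Finset.sum_le_sum fun i hi => Finset.sum_le_sum fun s hs => hω i hi s hs

lemma condExp_combo_le_of_concaveOn {m m0 : MeasurableSpace Ω} {P : Measure Ω} {v : ℝ → ℝ}
    (hv : ConcaveOn ℝ Set.univ v) {X Y : Ω → ℝ} {a b : ℝ} (ha : 0 ≤ a) (hb : 0 ≤ b)
    (hab : a + b = 1) (hX : Integrable (fun ω => v (X ω)) P)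
    (hY : Integrable (fun ω => v (Y ω)) P)
    (hXY : Integrable (fun ω => v (a * X ω + b * Y ω)) P) :
    (fun ω => a * (P[fun ω => v (X ω) | m]) ω + b * (P[fun ω => v (Y ω) | m]) ω) ≤ᵐ[P]
      P[fun ω => v (a * X ω + b * Y ω) | m] := by
  have hmono : P[a • (fun ω => v (X ω)) + b • (fun ω => v (Y ω)) | m] ≤ᵐ[P]
      P[fun ω => v (a * X ω + b * Y ω) | m] :=
    condExp_mono ((hX.smul a).add (hY.smul b)) hXY
      (.of_forall fun ω => hv.2 (Set.mem_univ (X ω)) (Set.mem_univ (Y ω)) ha hb hab)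
  filter_upwards [hmono, condExp_add (m := m) (hX.smul a) (hY.smul b),
    condExp_smul (μ := P) a (fun ω => v (X ω)) m,
    condExp_smul (μ := P) b (fun ω => v (Y ω)) m] with ω hle hadd hsmulX hsmulY
  rw [hadd, Pi.add_apply, hsmulX, hsmulY] at hle
  exact hle

/-- The set of total conditional expected utilities of the diversifications of `Z`, whose
essential supremum is the conditional utility `U_t(Z)`. -/
def attainableUtilities {m0 : MeasurableSpace Ω} (P : Measure Ω) (ℱ : Filtration ℕ m0)
    (u : ℕ → ℕ → ℝ → ℝ) (n t T : ℕ) (Z : Ω → ℝ) : Set (Ω → ℝ) :=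
  {g | ∃ X : ℕ → ℕ → Ω → ℝ, IsDiv P ℱ n t T Z X ∧ g = utilSum P ℱ u n t T X}

/-- The family of positions that holds `W` at the single index `(j, r)` and nothing elsewhere. -/
def singleAllocation (j r : ℕ) (W : Ω → ℝ) (i s : ℕ) : Ω → ℝ :=
  if i = j ∧ s = r then W else 0

lemma sum_sum_ite_and_eq {ι κ M : Type*} [DecidableEq ι] [DecidableEq κ] [AddCommMonoid M]
    {I : Finset ι} {J : Finset κ} {j : ι} {r : κ} (hj : j ∈ I) (hr : r ∈ J) (x : M) :
    (∑ i ∈ I, ∑ s ∈ J, if i = j ∧ s = r then x else 0) = x := by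
  simp [ite_and, hj, hr]

section Diversification

variable {m0 : MeasurableSpace Ω} {P : Measure Ω} {ℱ : Filtration ℕ m0} {n t T : ℕ}
  {X Y : ℕ → ℕ → Ω → ℝ} {Z W : Ω → ℝ} {j r : ℕ}

lemma measBdd_singleAllocation (hW : MeasBdd (ℱ r) W) (i s : ℕ) :
    MeasBdd (ℱ s) (singleAllocation j r W i s) := by
  unfold singleAllocation
  split_ifs with h
  · exact h.2 ▸ hW
  · exact .zero

lemma singleAllocation_nonneg (hW : 0 ≤ᵐ[P] W) (i s : ℕ) :
    0 ≤ᵐ[P] singleAllocation j r W i s := by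
  unfold singleAllocation
  split_ifs
  · exact hW
  · exact .rfl

lemma sum_singleAllocation (hj : j ∈ Finset.Icc 1 n) (hr : r ∈ Finset.Icc t T) (ω : Ω) :
    ∑ i ∈ Finset.Icc 1 n, ∑ s ∈ Finset.Icc t T, singleAllocation j r W i s ω = W ω := by
  simpa only [singleAllocation, ite_apply, Pi.zero_apply] using sum_sum_ite_and_eq hj hr (W ω)

lemma isDiv_singleAllocation (hj : j ∈ Finset.Icc 1 n) (hr : r ∈ Finset.Icc t T)
    (hW : MeasBdd (ℱ r) W) : IsDiv P ℱ n t T W (singleAllocation j r W) :=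
  ⟨fun i _ s _ => measBdd_singleAllocation hW i s, .of_forall (sum_singleAllocation hj hr)⟩

lemma IsDiv.add (hX : IsDiv P ℱ n t T Z X) (hY : IsDiv P ℱ n t T W Y) :
    IsDiv P ℱ n t T (Z + W) (X + Y) := by
  refine ⟨fun i hi s hs => (hX.1 i hi s hs).add (hY.1 i hi s hs), ?_⟩
  filter_upwards [hX.2, hY.2] with ω hXω hYω
  simp only [Pi.add_apply, Finset.sum_add_distrib, hXω, hYω]

lemma IsDiv.const_smul (hX : IsDiv P ℱ n t T Z X) (a : ℝ) : IsDiv P ℱ n t T (a • Z) (a • X) := by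
  refine ⟨fun i hi s hs => (hX.1 i hi s hs).const_smul a, ?_⟩
  filter_upwards [hX.2] with ω hω
  simp only [Pi.smul_apply, ← Finset.smul_sum, hω]

end Diversification

section TotalUtility

variable {m0 : MeasurableSpace Ω} {P : Measure Ω} {ℱ : Filtration ℕ m0} {n t T : ℕ}
  {u v : ℕ → ℕ → ℝ → ℝ} {X Y : ℕ → ℕ → Ω → ℝ} {Z : Ω → ℝ}

lemma measurable_utilSum : Measurable[ℱ t] (utilSum P ℱ u n t T X) :=
  Finset.measurable_fun_sum _ fun _ _ => Finset.measurable_fun_sum _ fun _ _ =>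
    stronglyMeasurable_condExp.measurable

lemma integrable_utilSum : Integrable (utilSum P ℱ u n t T X) P :=
  integrable_finsetSum _ fun _ _ => integrable_finsetSum _ fun _ _ => integrable_condExp

lemma utilSum_singleAllocation (hu0 : ∀ i s, u i s 0 = 0) {j r : ℕ} (hj : j ∈ Finset.Icc 1 n)
    (hr : r ∈ Finset.Icc t T) :
    utilSum P ℱ u n t T (singleAllocation j r Z) = P[fun ω => u j r (Z ω) | ℱ t] := by
  have hterm (i s : ℕ) : P[fun ω => u i s (singleAllocation j r Z i s ω) | ℱ t] =
      if i = j ∧ s = r then P[fun ω => u j r (Z ω) | ℱ t] else 0 := by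
    unfold singleAllocation
    split_ifs with h
    · rw [h.1, h.2]
    · simp only [Pi.zero_apply, hu0]
      exact condExp_zero
  ext ω
  simpa only [utilSum, hterm, ite_apply, Pi.zero_apply] using
    sum_sum_ite_and_eq hj hr ((P[fun ω => u j r (Z ω) | ℱ t]) ω)

variable [IsFiniteMeasure P]

lemma utilSum_ae_le_utilSum (hu : ∀ i s, Monotone (u i s)) (hv : ∀ i s, Monotone (v i s))
    (hX : ∀ i ∈ Finset.Icc 1 n, ∀ s ∈ Finset.Icc t T, MeasBdd (ℱ s) (X i s))
    (hY : ∀ i ∈ Finset.Icc 1 n, ∀ s ∈ Finset.Icc t T, MeasBdd (ℱ s) (Y i s))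
    (hle : ∀ i s, ∀ᵐ ω ∂P, u i s (X i s ω) ≤ v i s (Y i s ω)) :
    utilSum P ℱ u n t T X ≤ᵐ[P] utilSum P ℱ v n t T Y :=
  sum_sum_ae_le fun i hi s hs =>
    condExp_mono (((hX i hi s hs).comp_monotone (hu i s)).integrable (ℱ.le s))
      (((hY i hi s hs).comp_monotone (hv i s)).integrable (ℱ.le s)) (hle i s)

lemma utilSum_concave (hmono : ∀ i s, Monotone (u i s))
    (hconc : ∀ i s, ConcaveOn ℝ Set.univ (u i s)) {a b : ℝ} (ha : 0 ≤ a) (hb : 0 ≤ b)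
    (hab : a + b = 1)
    (hX : ∀ i ∈ Finset.Icc 1 n, ∀ s ∈ Finset.Icc t T, MeasBdd (ℱ s) (X i s))
    (hY : ∀ i ∈ Finset.Icc 1 n, ∀ s ∈ Finset.Icc t T, MeasBdd (ℱ s) (Y i s)) :
    a • utilSum P ℱ u n t T X + b • utilSum P ℱ u n t T Y ≤ᵐ[P]
      utilSum P ℱ u n t T (a • X + b • Y) := by
  have hint {i s : ℕ} {Z : Ω → ℝ} (hZ : MeasBdd (ℱ s) Z) : Integrable (fun ω => u i s (Z ω)) P :=
    (hZ.comp_monotone (hmono i s)).integrable (ℱ.le s)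
  have hterms := sum_sum_ae_le fun i (hi : i ∈ Finset.Icc 1 n) s (hs : s ∈ Finset.Icc t T) =>
    condExp_combo_le_of_concaveOn (m := ℱ t) (hconc i s) ha hb hab (hint (hX i hi s hs))
      (hint (hY i hi s hs)) (hint (((hX i hi s hs).const_smul a).add ((hY i hi s hs).const_smul b)))
  filter_upwards [hterms] with ω hω
  simp only [Finset.sum_add_distrib, ← Finset.mul_sum] at hω
  exact hω

lemma IsDiv.utilSum_id_ae_eq (hX : IsDiv P ℱ n t T Z X) :
    utilSum P ℱ (fun _ _ => id) n t T X =ᵐ[P] P[Z | ℱ t] := by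
  have hint : ∀ p ∈ Finset.Icc 1 n ×ˢ Finset.Icc t T, Integrable (X p.1 p.2) P := fun p hp =>
    (hX.1 _ (Finset.mem_product.1 hp).1 _ (Finset.mem_product.1 hp).2).integrable (ℱ.le _)
  have hsum : (∑ p ∈ Finset.Icc 1 n ×ˢ Finset.Icc t T, X p.1 p.2) =ᵐ[P] Z := by
    filter_upwards [hX.2] with ω hω
    rw [Finset.sum_apply, Finset.sum_product, hω]
  filter_upwards [condExp_finsetSum hint (ℱ t), condExp_congr_ae (m := ℱ t) hsum]
    with ω hlinear hcongr
  rw [← hcongr, hlinear, Finset.sum_apply, Finset.sum_product]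
  rfl

lemma IsDiv.utilSum_le_condExp (hmono : ∀ i s, Monotone (u i s)) (hle : ∀ i s x, u i s x ≤ x)
    (hX : IsDiv P ℱ n t T Z X) : utilSum P ℱ u n t T X ≤ᵐ[P] P[Z | ℱ t] :=
  (utilSum_ae_le_utilSum hmono (fun _ _ => monotone_id) hX.1 hX.1
    fun i s => .of_forall fun _ => hle i s _).trans hX.utilSum_id_ae_eq.le

end TotalUtility

section ConditionalUtility

variable {m0 : MeasurableSpace Ω} {P : Measure Ω} {ℱ : Filtration ℕ m0} {n t T : ℕ}
  {u : ℕ → ℕ → ℝ → ℝ} {Z W V V' : Ω → ℝ} {j r : ℕ}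

lemma condExp_le_conditionalUtility (hu0 : ∀ i s, u i s 0 = 0) (hj : j ∈ Finset.Icc 1 n)
    (hr : r ∈ Finset.Icc t T) (hZ : MeasBdd (ℱ r) Z)
    (hV : IsEssSupOf P (attainableUtilities P ℱ u n t T Z) V) :
    P[fun ω => u j r (Z ω) | ℱ t] ≤ᵐ[P] V :=
  hV.1 _ ⟨_, isDiv_singleAllocation hj hr hZ, (utilSum_singleAllocation hu0 hj hr).symm⟩

variable [IsFiniteMeasure P]

lemma conditionalUtility_le_condExp (hmono : ∀ i s, Monotone (u i s))
    (hle : ∀ i s x, u i s x ≤ x) (hV : IsEssSupOf P (attainableUtilities P ℱ u n t T Z) V) :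
    V ≤ᵐ[P] P[Z | ℱ t] :=
  hV.2 _ <| by
    rintro _ ⟨X, hX, rfl⟩
    exact hX.utilSum_le_condExp hmono hle

lemma exists_measBdd_ae_eq_conditionalUtility (hmono : ∀ i s, Monotone (u i s))
    (hu0 : ∀ i s, u i s 0 = 0) (hle : ∀ i s x, u i s x ≤ x) (hj : j ∈ Finset.Icc 1 n)
    (hr : r ∈ Finset.Icc t T) (hZ : MeasBdd (ℱ r) Z)
    (hV : IsEssSupOf P (attainableUtilities P ℱ u n t T Z) V) :
    ∃ V', MeasBdd (ℱ t) V' ∧ V =ᵐ[P] V' := by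
  have hlower := condExp_le_conditionalUtility hu0 hj hr hZ hV
  have hupper := conditionalUtility_le_condExp hmono hle hV
  have hmeas : ∀ f ∈ attainableUtilities P ℱ u n t T Z, Measurable[ℱ t] f ∧ Integrable f P := by
    rintro _ ⟨X, -, rfl⟩
    exact ⟨measurable_utilSum, integrable_utilSum⟩
  have hVint : Integrable V P :=
    hV.integrable (fun f hf => (hmeas f hf).2.aemeasurable) integrable_condExp integrable_condExp
      hlower hupper
  obtain ⟨C, hC⟩ := (hZ.comp_monotone (hmono j r)).2
  obtain ⟨D, hD⟩ := hZ.2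
  have hVC := hV.ae_eq_condExp (ℱ.le t) hmeas hVint
  have hbound : ∀ᵐ ω ∂P, |(P[V | ℱ t]) ω| ≤ max C D := by
    filter_upwards [hVC, hlower, hupper, ae_bdd_abs_condExp_of_ae_bdd_abs (.of_forall hC),
      ae_bdd_abs_condExp_of_ae_bdd_abs (.of_forall hD)] with ω hω hloω hupω hCω hDω
    rw [← hω]
    exact (abs_le_max_abs_abs hloω hupω).trans (max_le_max hCω hDω)
  obtain ⟨V', hV', heq⟩ := exists_measBdd_ae_eq stronglyMeasurable_condExp.measurable hbound
  exact ⟨V', hV', hVC.trans heq⟩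

lemma conditionalUtility_zero (hmono : ∀ i s, Monotone (u i s)) (hu0 : ∀ i s, u i s 0 = 0)
    (hle : ∀ i s x, u i s x ≤ x) (hj : j ∈ Finset.Icc 1 n) (hr : r ∈ Finset.Icc t T)
    (hV : IsEssSupOf P (attainableUtilities P ℱ u n t T 0) V) :
    V =ᵐ[P] 0 := by
  have hlower := condExp_le_conditionalUtility hu0 hj hr .zero hV
  have hupper := conditionalUtility_le_condExp hmono hle hV
  have hu_zero : (fun ω => u j r ((0 : Ω → ℝ) ω)) = 0 := funext fun _ => hu0 j r
  rw [hu_zero, condExp_zero] at hlower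
  rw [condExp_zero] at hupper
  exact hupper.antisymm hlower

lemma conditionalUtility_mono (hmono : ∀ i s, Monotone (u i s)) (hj : j ∈ Finset.Icc 1 n)
    (hr : r ∈ Finset.Icc t T) (hZ : MeasBdd (ℱ r) Z) (hW : MeasBdd (ℱ r) W) (hWZ : W ≤ᵐ[P] Z)
    (hV : IsEssSupOf P (attainableUtilities P ℱ u n t T Z) V)
    (hV' : IsEssSupOf P (attainableUtilities P ℱ u n t T W) V') : V' ≤ᵐ[P] V := by
  refine hV'.2 _ ?_
  rintro _ ⟨X, hX, rfl⟩
  have hdiv := hX.add (isDiv_singleAllocation (P := P) hj hr (hZ.sub hW))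
  rw [add_sub_cancel] at hdiv
  refine .trans (utilSum_ae_le_utilSum hmono hmono hX.1 hdiv.1 fun i s => ?_)
    (hV.1 _ ⟨_, hdiv, rfl⟩)
  have hsurplus : 0 ≤ᵐ[P] Z - W := hWZ.mono fun _ => sub_nonneg.2
  filter_upwards [singleAllocation_nonneg (j := j) (r := r) hsurplus i s] with ω hω
  exact hmono i s (le_add_of_nonneg_right hω)

lemma conditionalUtility_concave (hmono : ∀ i s, Monotone (u i s))
    (hconc : ∀ i s, ConcaveOn ℝ Set.univ (u i s)) {a b : ℝ} (ha : 0 < a) (hb : 0 < b)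
    (hab : a + b = 1) {V'' : Ω → ℝ}
    (hV : IsEssSupOf P (attainableUtilities P ℱ u n t T Z) V)
    (hV' : IsEssSupOf P (attainableUtilities P ℱ u n t T W) V')
    (hV'' : IsEssSupOf P (attainableUtilities P ℱ u n t T (a • Z + b • W)) V'') :
    a • V + b • V' ≤ᵐ[P] V'' := by
  refine hV.smul_add_smul_le hV' ha hb ?_
  rintro _ ⟨X, hX, rfl⟩ _ ⟨Y, hY, rfl⟩
  exact (utilSum_concave hmono hconc ha.le hb.le hab hX.1 hY.1).trans
    (hV''.1 _ ⟨_, (hX.const_smul a).add (hY.const_smul b), rfl⟩)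

end ConditionalUtility

theorem conditional_utility_properties_general
    {m0 : MeasurableSpace Ω} (P : Measure Ω) [IsFiniteMeasure P]
    (ℱ : Filtration ℕ m0) (T n t : ℕ) (hn : 0 < n) (ht : t ≤ T) (u : ℕ → ℕ → ℝ → ℝ)
    (hmono : ∀ i s, Monotone (u i s)) (hconc : ∀ i s, ConcaveOn ℝ Set.univ (u i s))
    (hu0 : ∀ i s, u i s 0 = 0) (hle : ∀ i s x, u i s x ≤ x) (U : (Ω → ℝ) → Ω → ℝ)
    (hU : ∀ Z : Ω → ℝ, MeasBdd (ℱ T) Z →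
      IsEssSupOf P (attainableUtilities P ℱ u n t T Z) (U Z)) :
    (∀ Z : Ω → ℝ, MeasBdd (ℱ T) Z → ∃ V : Ω → ℝ, MeasBdd (ℱ t) V ∧ U Z =ᵐ[P] V) ∧
    U 0 =ᵐ[P] 0 ∧
    (∀ X Y : Ω → ℝ, MeasBdd (ℱ T) X → MeasBdd (ℱ T) Y → Y ≤ᵐ[P] X → U Y ≤ᵐ[P] U X) ∧
    (∀ X Y : Ω → ℝ, ∀ a : ℝ, MeasBdd (ℱ T) X → MeasBdd (ℱ T) Y → 0 < a → a < 1 →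
      a • U X + (1 - a) • U Y ≤ᵐ[P] U (a • X + (1 - a) • Y)) := by
  have h1_mem : 1 ∈ Finset.Icc 1 n := Finset.left_mem_Icc.2 hn
  have hT_mem : T ∈ Finset.Icc t T := Finset.right_mem_Icc.2 ht
  refine ⟨fun Z hZ => ?_, ?_, fun X Y hX hY hYX => ?_, fun X Y a hX hY ha ha1 => ?_⟩
  · exact exists_measBdd_ae_eq_conditionalUtility hmono hu0 hle h1_mem hT_mem hZ (hU Z hZ)
  · exact conditionalUtility_zero hmono hu0 hle h1_mem hT_mem (hU 0 .zero)
  · exact conditionalUtility_mono hmono h1_mem hT_mem hX hY hYX (hU X hX) (hU Y hY)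
  · exact conditionalUtility_concave hmono hconc ha (sub_pos.2 ha1) (add_sub_cancel a 1)
      (hU X hX) (hU Y hY) (hU _ ((hX.const_smul a).add (hY.const_smul (1 - a))))

/-- Proposition 2.4: the conditional utility `U_t` maps `L^∞_T` into
`L^∞_t`, vanishes at `0`, and is monotone and concave. -/
theorem conditional_utility_properties
    {m0 : MeasurableSpace Ω} (P : Measure Ω) [IsProbabilityMeasure P]
    (ℱ : Filtration ℕ m0) (T n t : ℕ) (hT : 0 < T) (hn : 0 < n) (ht : t ≤ T)
    (u u' : ℕ → ℕ → ℝ → ℝ) (hu : ∀ i s, IsUtility (u i s) (u' i s))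
    (U : (Ω → ℝ) → Ω → ℝ)
    -- `U Z` is the essential supremum over all diversifications of `Z` of the
    -- total conditional expected utility:
    (hU : ∀ Z : Ω → ℝ, MeasBdd (ℱ T) Z →
      IsEssSupOf P
        {g | ∃ X : ℕ → ℕ → Ω → ℝ, IsDiv P ℱ n t T Z X ∧ g = utilSum P ℱ u n t T X}
        (U Z)) :
    -- `U` maps `L^∞_T` into `L^∞_t`:
    (∀ Z : Ω → ℝ, MeasBdd (ℱ T) Z → ∃ V : Ω → ℝ, MeasBdd (ℱ t) V ∧ U Z =ᵐ[P] V) ∧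
    -- `U_t(0) = 0` a.s.:
    (U (fun _ => 0) =ᵐ[P] fun _ => 0) ∧
    -- monotonicity:
    (∀ X Y : Ω → ℝ, MeasBdd (ℱ T) X → MeasBdd (ℱ T) Y → Y ≤ᵐ[P] X →
      U Y ≤ᵐ[P] U X) ∧
    -- concavity:
    (∀ X Y : Ω → ℝ, ∀ a : ℝ, MeasBdd (ℱ T) X → MeasBdd (ℱ T) Y → 0 < a → a < 1 →
      (fun ω => a * U X ω + (1 - a) * U Y ω) ≤ᵐ[P]
        U (fun ω => a * X ω + (1 - a) * Y ω)) :=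
  conditional_utility_properties_general P ℱ T n t hn ht u
    (fun i s => (hu i s).strictMono.monotone) (fun i s => (hu i s).strictConcave.concaveOn)
    (fun i s => (hu i s).zero) (fun i s => (hu i s).le_self) U hU
end

section
/- For each s, the sup-convolution u_s^{(n)} : ℝ → ℝ is again a strictly increasing, strictly concave C^1 function satisfying u_s^{(n)}(0) = 0, (u_s^{(n)})'(0) = 1, lim_{x→+∞} (u_s^{(n)})'(x) = 0 and lim_{x→−∞} (u_s^{(n)})'(x) = +∞. Moreover, if I_{i,s} denotes the inverse function of u_{i,s}', then for all x ∈ ℝ: u_s^{(n)}(x) = Σ_{i=1}^n u_{i,s}( I_{i,s}( (Σ_{j=1}^n I_{j,s})^{-1}(x) ) ), where (Σ_{j=1}^n I_{j,s})^{-1} is the inverse of the function y ↦ Σ_{j=1}^n I_{j,s}(y). -/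
open Filter

/-- The sup-convolution `u^{(n)}(x) = sup { Σ_{i=1}^n u_i(x_i) : Σ_{i=1}^n x_i = x }`. -/
noncomputable def supConv (u : ℕ → ℝ → ℝ) (n : ℕ) (x : ℝ) : ℝ :=
  sSup {y | ∃ xs : ℕ → ℝ, (∑ i ∈ Finset.Icc 1 n, xs i) = x ∧
    y = ∑ i ∈ Finset.Icc 1 n, u i (xs i)}

/-!
If `c` is a common supergradient of the `u i` at points `xs i`, summing the tangent inequalities
shows that `xs` is an optimal allocation of its total and that `c` is a supergradient of the
sup-convolution there. Giving any change of the total to a single `i` bounds the sup-convolution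
from below by a translate of `u i`; together with the supporting hyperplane this squeezes it, so it
is differentiable with derivative `c` as soon as one `u i` is. The points `I i y` have the common
supergradient `y`, whence the derivative of the sup-convolution at `∑ i, I i y` is `y`. This
derivative is therefore strictly decreasing with range `(0, ∞)`, which yields its continuity and
its limits.
-/

open Set Topology

section Supergradient

variable {E : Type*} [NormedAddCommGroup E] [NormedSpace ℝ E] {f : E → ℝ}
  {c d : E →L[ℝ] ℝ} {x y : E}

/-- The continuous linear functional `c` is a supergradient of `f` at `x`: the affine function with
slope `c` through `(x, f x)` dominates `f` everywhere. -/
def IsSupergradientAt (f : E → ℝ) (c : E →L[ℝ] ℝ) (x : E) : Prop :=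
  ∀ y, f y ≤ f x + c (y - x)

theorem isSupergradientAt_of_concaveOn_of_hasFDerivAt (hf : ConcaveOn ℝ univ f)
    (hc : HasFDerivAt f c x) : IsSupergradientAt f c x := by
  intro y
  let line : ℝ →ᵃ[ℝ] E := AffineMap.lineMap x y
  have hline : HasDerivAt (f ∘ line) (c (y - x)) 0 :=
    HasFDerivAt.comp_hasDerivAt 0 (by simpa [line] using hc) AffineMap.hasDerivAt_lineMap
  have hslope : slope (f ∘ line) 0 1 ≤ c (y - x) :=
    (hf.comp_affineMap line).slope_le_of_hasDerivAt trivial trivial one_pos hline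
  have hslope_eq : slope (f ∘ line) 0 1 = f y - f x := by simp [slope_def_field, line]
  linarith

theorem IsSupergradientAt.sub_apply_sub_nonpos (hc : IsSupergradientAt f c x)
    (hd : IsSupergradientAt f d y) : (d - c) (y - x) ≤ 0 := by
  have hcy := hc y
  have hdx := hd x
  rw [← neg_sub y x, map_neg] at hdx
  rw [sub_apply]
  linarith

theorem antitone_of_isSupergradientAt {f f' : ℝ → ℝ}
    (h : ∀ x, IsSupergradientAt f (.toSpanSingleton ℝ (f' x)) x) : Antitone f' := by
  intro x y hxy
  rcases hxy.eq_or_lt with rfl | hlt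
  · exact le_rfl
  have hmono : (y - x) * (f' y - f' x) ≤ 0 := by
    simpa [mul_sub] using (h x).sub_apply_sub_nonpos (h y)
  exact sub_nonpos.1 (nonpos_of_mul_nonpos_right hmono (sub_pos.2 hlt))

end Supergradient

theorem hasFDerivAt_of_le_of_le {E : Type*} [NormedAddCommGroup E] [NormedSpace ℝ E]
    {f g h : E → ℝ} {c : E →L[ℝ] ℝ} {x : E} (hf : HasFDerivAt f c x) (hh : HasFDerivAt h c x)
    (hfg : f ≤ᶠ[𝓝 x] g) (hgh : g ≤ᶠ[𝓝 x] h) (hfgx : f x = g x) (hghx : g x = h x) :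
    HasFDerivAt g c x := by
  rw [hasFDerivAt_iff_isLittleO] at hf hh ⊢
  refine Asymptotics.IsBigO.trans_isLittleO (.of_bound' ?_) (hf.norm_left.add hh.norm_left)
  filter_upwards [hfg, hgh] with y hfgy hghy
  calc ‖g y - g x - c (y - x)‖
      ≤ max ‖f y - f x - c (y - x)‖ ‖h y - h x - c (y - x)‖ :=
        abs_le_max_abs_abs (by linarith) (by linarith)
    _ ≤ ‖f y - f x - c (y - x)‖ + ‖h y - h x - c (y - x)‖ :=
        max_le_add_of_nonneg (norm_nonneg _) (norm_nonneg _)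
    _ ≤ _ := Real.le_norm_self _

section SupConvOn

variable {ι E : Type*} {s : Finset ι} {u : ι → E → ℝ}

/-- The sup-convolution of the family `(u i)_{i ∈ s}`, for an arbitrary finite index set;
`supConv u n` is by definition `supConvOn (Finset.Icc 1 n) u`. It takes the junk value `0` where the
supremum is over an empty or unbounded set. -/
noncomputable def supConvOn [AddCommMonoid E] (s : Finset ι) (u : ι → E → ℝ) (x : E) : ℝ :=
  sSup {y | ∃ xs : ι → E, (∑ i ∈ s, xs i) = x ∧ y = ∑ i ∈ s, u i (xs i)}

variable [NormedAddCommGroup E] [NormedSpace ℝ E] {c : E →L[ℝ] ℝ} {xs : ι → E}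

theorem sum_le_sum_add_of_isSupergradientAt
    (hc : ∀ i ∈ s, IsSupergradientAt (u i) c (xs i)) (ys : ι → E) :
    ∑ i ∈ s, u i (ys i) ≤ ∑ i ∈ s, u i (xs i) + c (∑ i ∈ s, ys i - ∑ i ∈ s, xs i) :=
  calc ∑ i ∈ s, u i (ys i)
      ≤ ∑ i ∈ s, (u i (xs i) + c (ys i - xs i)) := Finset.sum_le_sum fun i hi => hc i hi (ys i)
    _ = _ := by rw [Finset.sum_add_distrib, ← map_sum, Finset.sum_sub_distrib]

theorem sum_le_supConvOn (hc : ∀ i ∈ s, IsSupergradientAt (u i) c (xs i)) (ys : ι → E) :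
    ∑ i ∈ s, u i (ys i) ≤ supConvOn s u (∑ i ∈ s, ys i) := by
  refine le_csSup ⟨∑ i ∈ s, u i (xs i) + c (∑ i ∈ s, ys i - ∑ i ∈ s, xs i), ?_⟩ ⟨ys, rfl, rfl⟩
  rintro _ ⟨zs, hzs, rfl⟩
  exact hzs ▸ sum_le_sum_add_of_isSupergradientAt hc zs

theorem supConvOn_sum (hc : ∀ i ∈ s, IsSupergradientAt (u i) c (xs i)) :
    supConvOn s u (∑ i ∈ s, xs i) = ∑ i ∈ s, u i (xs i) := by
  refine IsGreatest.csSup_eq ⟨⟨xs, rfl, rfl⟩, ?_⟩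
  rintro _ ⟨ys, hys, rfl⟩
  simpa [hys] using sum_le_sum_add_of_isSupergradientAt hc ys

theorem isSupergradientAt_supConvOn (hs : s.Nonempty)
    (hc : ∀ i ∈ s, IsSupergradientAt (u i) c (xs i)) :
    IsSupergradientAt (supConvOn s u) c (∑ i ∈ s, xs i) := by
  classical
  intro y
  obtain ⟨i, hi⟩ := hs
  refine csSup_le ⟨_, Pi.single i y, by simp [hi], rfl⟩ ?_
  rintro _ ⟨ys, rfl, rfl⟩
  exact supConvOn_sum hc ▸ sum_le_sum_add_of_isSupergradientAt hc ys

theorem add_sum_sdiff_singleton_le_supConvOn [DecidableEq ι]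
    (hc : ∀ i ∈ s, IsSupergradientAt (u i) c (xs i)) {i : ι} (hi : i ∈ s) (v : E) :
    u i (xs i + v) + ∑ j ∈ s \ {i}, u j (xs j) ≤ supConvOn s u (∑ j ∈ s, xs j + v) := by
  have htotal : ∑ j ∈ s, Function.update xs i (xs i + v) j = ∑ j ∈ s, xs j + v := by
    rw [Finset.sum_update_of_mem hi, Finset.sum_eq_add_sum_sdiff_singleton_of_mem hi,
      add_right_comm]
  have hvalue : ∑ j ∈ s, u j (Function.update xs i (xs i + v) j) =
      u i (xs i + v) + ∑ j ∈ s \ {i}, u j (xs j) := by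
    simp only [Function.apply_update u, Finset.sum_update_of_mem hi]
  rw [← hvalue, ← htotal]
  exact sum_le_supConvOn hc _

theorem hasFDerivAt_supConvOn (hc : ∀ i ∈ s, IsSupergradientAt (u i) c (xs i)) {i : ι}
    (hi : i ∈ s) (hderiv : HasFDerivAt (u i) c (xs i)) :
    HasFDerivAt (supConvOn s u) c (∑ j ∈ s, xs j) := by
  classical
  set x := ∑ j ∈ s, xs j
  let lower (y : E) : ℝ := u i (xs i + (y - x)) + ∑ j ∈ s \ {i}, u j (xs j)
  have hlower_le (y : E) : lower y ≤ supConvOn s u y := by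
    simpa only [x, add_sub_cancel] using add_sum_sdiff_singleton_le_supConvOn hc hi (y - x)
  have hlower_eq : lower x = supConvOn s u x := by
    simp only [lower, sub_self, add_zero]
    rw [supConvOn_sum hc, Finset.sum_eq_add_sum_sdiff_singleton_of_mem hi]
  have hsub : HasFDerivAt (fun y => y - x) (.id ℝ E) x := (hasFDerivAt_id x).sub_const x
  have hlower : HasFDerivAt lower c x :=
    (HasFDerivAt.comp x (by simpa using hderiv) (hsub.const_add (xs i))).add_const _
  have hupper : HasFDerivAt (fun y => supConvOn s u x + c (y - x)) c x :=
    (c.hasFDerivAt.comp x hsub).const_add _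
  exact hasFDerivAt_of_le_of_le hlower hupper (.of_forall hlower_le)
    (.of_forall (isSupergradientAt_supConvOn ⟨i, hi⟩ hc)) hlower_eq (by simp)

theorem hasDerivAt_supConvOn {u : ι → ℝ → ℝ} {c : ℝ} {xs : ι → ℝ} (hs : s.Nonempty)
    (hconc : ∀ i ∈ s, ConcaveOn ℝ univ (u i)) (hderiv : ∀ i ∈ s, HasDerivAt (u i) c (xs i)) :
    HasDerivAt (supConvOn s u) c (∑ i ∈ s, xs i) := by
  obtain ⟨k, hk⟩ := hs
  exact hasFDerivAt_supConvOn
    (fun i hi => isSupergradientAt_of_concaveOn_of_hasFDerivAt (hconc i hi) (hderiv i hi)) hk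
    (hderiv k hk)

end SupConvOn

theorem continuous_of_antitone_of_ordConnected_range {α β : Type*} [LinearOrder α]
    [TopologicalSpace α] [OrderTopology α] [LinearOrder β] [TopologicalSpace β] [OrderTopology β]
    [DenselyOrdered β] {f : α → β} (hf : Antitone f) (hrange : (range f).OrdConnected) :
    Continuous f := by
  have hmono : Monotone (OrderDual.toDual ∘ rangeFactorization f) := fun _ _ hxy => hf hxy
  exact continuous_subtype_val.comp (hmono.continuous_of_surjective rangeFactorization_surjective)

theorem isUtility_of_strictAnti_of_range_eq_Ioi {v v' : ℝ → ℝ} (hv : ∀ x, HasDerivAt v (v' x) x)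
    (hanti : StrictAnti v') (hrange : range v' = Ioi 0) (hzero : v 0 = 0) (hone : v' 0 = 1) :
    IsUtility v v' where
  strictMono := strictMono_of_hasDerivAt_pos hv fun x => hrange.subset (mem_range_self x)
  strictConcave := by
    have hdiff : Differentiable ℝ v := fun x => (hv x).differentiableAt
    have hderiv : deriv v = v' := funext fun x => (hv x).deriv
    exact StrictAnti.strictConcaveOn_univ_of_deriv hdiff.continuous (hderiv ▸ hanti)
  hasDeriv := hv
  derivCont :=
    continuous_of_antitone_of_ordConnected_range hanti.antitone (hrange ▸ ordConnected_Ioi)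
  zero := hzero
  deriv_zero := hone
  deriv_top := tendsto_atTop_isGLB hanti.antitone (hrange ▸ isGLB_Ioi)
  deriv_bot := tendsto_atTop.2 fun b => by
    obtain ⟨a, ha⟩ : max b 1 ∈ range v' := hrange ▸ mem_Ioi.2 (lt_max_of_lt_right one_pos)
    filter_upwards [eventually_le_atBot a] with x hx
    exact (le_max_left b 1).trans (ha ▸ hanti.antitone hx)

theorem supConv_isUtility_and_formula_general {ι : Type*} (s : Finset ι) (u I : ι → ℝ → ℝ)
    (J : ℝ → ℝ) (hconc : ∀ i ∈ s, ConcaveOn ℝ univ (u i)) (hzero : ∀ i ∈ s, u i 0 = 0)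
    (hone : ∀ i ∈ s, HasDerivAt (u i) 1 0)
    (hI : ∀ i ∈ s, ∀ y, 0 < y → HasDerivAt (u i) y (I i y))
    (hJ : ∀ x, 0 < J x ∧ ∑ i ∈ s, I i (J x) = x) :
    IsUtility (supConvOn s u) J ∧ ∀ x, supConvOn s u x = ∑ i ∈ s, u i (I i (J x)) := by
  have hs : s.Nonempty :=
    Finset.nonempty_of_sum_ne_zero (ne_of_eq_of_ne (hJ 1).2 one_ne_zero)
  have hsuper (y : ℝ) (hy : 0 < y) (i : ι) (hi : i ∈ s) :
      IsSupergradientAt (u i) (.toSpanSingleton ℝ y) (I i y) :=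
    isSupergradientAt_of_concaveOn_of_hasFDerivAt (hconc i hi) (hI i hi y hy)
  have hderiv (y : ℝ) (hy : 0 < y) : HasDerivAt (supConvOn s u) y (∑ i ∈ s, I i y) :=
    hasDerivAt_supConvOn hs hconc fun i hi => hI i hi y hy
  have hderiv_J (x : ℝ) : HasDerivAt (supConvOn s u) (J x) x := by
    simpa only [(hJ x).2] using hderiv (J x) (hJ x).1
  have hrange : range J = Ioi 0 :=
    (range_subset_iff.2 fun x => (hJ x).1).antisymm fun y hy =>
      ⟨∑ i ∈ s, I i y, (hderiv_J _).unique (hderiv y hy)⟩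
  have hanti : Antitone J := antitone_of_isSupergradientAt fun x => by
    simpa only [(hJ x).2] using isSupergradientAt_supConvOn hs (hsuper (J x) (hJ x).1)
  have hinj : J.Injective := Function.LeftInverse.injective (g := fun y => ∑ i ∈ s, I i y)
    fun x => (hJ x).2
  have hvalue_zero : supConvOn s u 0 = 0 := by
    simpa [Finset.sum_eq_zero hzero] using supConvOn_sum fun i hi =>
      isSupergradientAt_of_concaveOn_of_hasFDerivAt (hconc i hi) (hone i hi)
  have hderiv_zero : HasDerivAt (supConvOn s u) 1 0 := by
    simpa only [Finset.sum_const_zero] using hasDerivAt_supConvOn hs hconc hone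
  refine ⟨isUtility_of_strictAnti_of_range_eq_Ioi hderiv_J (hanti.strictAnti_of_injective hinj)
    hrange hvalue_zero ((hderiv_J 0).unique hderiv_zero), fun x => ?_⟩
  simpa only [(hJ x).2] using supConvOn_sum (hsuper (J x) (hJ x).1)

/-- Proposition 2.16: the sup-convolution of utility functions is again a
utility function, and it is given explicitly by
`u^{(n)}(x) = Σ_i u_i(I_i((Σ_j I_j)⁻¹(x)))`, where `I_i = (u_i')⁻¹`. -/
theorem supConv_isUtility_and_formula
    (n : ℕ) (hn : 0 < n)
    (u u' : ℕ → ℝ → ℝ) (hu : ∀ i ∈ Finset.Icc 1 n, IsUtility (u i) (u' i))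
    -- `I i` is the inverse function of `u' i`:
    (I : ℕ → ℝ → ℝ)
    (hI : ∀ i ∈ Finset.Icc 1 n,
      (∀ x : ℝ, I i (u' i x) = x) ∧ ∀ y : ℝ, 0 < y → u' i (I i y) = y)
    -- `J` is the inverse function of `y ↦ Σ_{j=1}^n I j y`:
    (J : ℝ → ℝ)
    (hJ : ∀ x : ℝ, 0 < J x ∧ (∑ j ∈ Finset.Icc 1 n, I j (J x)) = x) :
    -- the sup-convolution is again a utility function …
    (∃ D : ℝ → ℝ, IsUtility (supConv u n) D) ∧
    -- … and the explicit formula holds: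
    ∀ x : ℝ, supConv u n x = ∑ i ∈ Finset.Icc 1 n, u i (I i (J x)) := by
  exact (supConv_isUtility_and_formula_general (Finset.Icc 1 n) u I J
    (fun i hi => (hu i hi).strictConcave.concaveOn) (fun i hi => (hu i hi).zero)
    (fun i hi => (hu i hi).deriv_zero ▸ (hu i hi).hasDeriv 0)
    (fun i hi y hy => by simpa only [(hI i hi).2 y hy] using (hu i hi).hasDeriv (I i y))
    hJ).imp_left fun hutility => ⟨J, hutility⟩
end
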